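/- Let a ∈ L¹(ℝ₊)^{p×p}, b ∈ L¹(ℝ₊)^{p×q}, c ∈ L¹(ℝ₋)^{q×p}, d ∈ L¹(ℝ₋)^{q×q}, and set α = e_p + a, β = b, γ = c, δ = e_q + d. Assume the transposed identities a + a* + a⋆a* − b⋆b* = 0, d + d* + d⋆d* − c⋆c* = 0 and c* + a⋆c* = b + b⋆d* hold. Then the operators M₁₁, M₂₁, M₁₂, M₂₂ admit the alternative representations M₁₁ = I − H₊,α H₋,α* + H₊,β H₋,β*, M₂₁ = T₋,δ H₋,β* − T₋,γ H₋,α*, M₁₂ = T₊,α H₊,γ* − T₊,β H₊,δ*, and M₂₂ = I − H₋,δ H₊,δ* + H₋,γ H₊,γ*. -/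

import Mathlib

/-!
On the whole line, the operator `F ↦ r₀ F + r ⋆ F` (`fullOp r₀ r`) is multiplicative in its symbol
up to null sets (`fullOp_fullOp`), by associativity of convolution on `L¹`. The Wiener–Hopf and
Hankel operators are its four blocks with respect to the splitting `L¹(ℝ) = L¹(ℝ₊) ⊕ L¹(ℝ₋)`
(`IsTP.full`, `IsTM.full`, `IsHP.full`, `IsHM.full`; the off-diagonal blocks do not depend on `r₀`).
Multiplying block matrices, a block of the operator with symbol `ρ ⋆ σ` is a sum of two products of
blocks (`compress`), for instance `T₊,α T₊,α* + H₊,α H₋,α*` is the compression of `α ⋆ α*` to `ℝ₊`.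

The hypotheses say `α ⋆ α* - β ⋆ β* = e`, `δ ⋆ δ* - γ ⋆ γ* = e` and `α ⋆ γ* = β ⋆ δ*`, and the
adjoint of the last one is `γ ⋆ α* = δ ⋆ β*`. Taking the matching block of each of these four
identities and rearranging the four products gives the four claims.
-/

open MeasureTheory Set Matrix
open scoped ComplexConjugate

noncomputable section

abbrev MatF (r s : ℕ) := ℝ → Matrix (Fin r) (Fin s) ℂ

def conv {r s u : ℕ} (f : MatF r s) (h : MatF s u) : MatF r u :=
  fun t => Matrix.of fun i j => ∫ τ : ℝ, (f (t - τ) * h τ) i j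

def adjF {r s : ℕ} (f : MatF r s) : MatF s r := fun t => (f (-t))ᴴ

def L1Plus {r s : ℕ} (f : MatF r s) : Prop :=
  (∀ i j, Integrable fun t => f t i j) ∧ ∀ t < (0:ℝ), f t = 0

def L1Minus {r s : ℕ} (f : MatF r s) : Prop :=
  (∀ i j, Integrable fun t => f t i j) ∧ ∀ t > (0:ℝ), f t = 0

def μP : Measure ℝ := volume.restrict (Ici 0)
def μM : Measure ℝ := volume.restrict (Iic 0)

abbrev L1P (n : ℕ) := Lp (Fin n → ℂ) 1 μP
abbrev L1M (n : ℕ) := Lp (Fin n → ℂ) 1 μM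

def IsHP {k m : ℕ} (r : MatF k m) (H : L1M m →L[ℂ] L1P k) : Prop :=
  ∀ f : L1M m, ⇑(H f) =ᵐ[μP] fun t => ∫ s, (r (t - s)).mulVec (f s) ∂μM

def IsHM {k m : ℕ} (r : MatF k m) (H : L1P m →L[ℂ] L1M k) : Prop :=
  ∀ f : L1P m, ⇑(H f) =ᵐ[μM] fun t => ∫ s, (r (t - s)).mulVec (f s) ∂μP

def IsTP {k m : ℕ} (r₀ : Matrix (Fin k) (Fin m) ℂ) (r : MatF k m)
    (T : L1P m →L[ℂ] L1P k) : Prop :=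
  ∀ f : L1P m, ⇑(T f) =ᵐ[μP] fun t => r₀.mulVec (f t) + ∫ s, (r (t - s)).mulVec (f s) ∂μP

def IsTM {k m : ℕ} (r₀ : Matrix (Fin k) (Fin m) ℂ) (r : MatF k m)
    (T : L1M m →L[ℂ] L1M k) : Prop :=
  ∀ f : L1M m, ⇑(T f) =ᵐ[μM] fun t => r₀.mulVec (f t) + ∫ s, (r (t - s)).mulVec (f s) ∂μM

def blockCLM {X Y Z W : Type*} [NormedAddCommGroup X] [NormedSpace ℂ X]
    [NormedAddCommGroup Y] [NormedSpace ℂ Y] [NormedAddCommGroup Z] [NormedSpace ℂ Z]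
    [NormedAddCommGroup W] [NormedSpace ℂ W]
    (A : X →L[ℂ] Z) (B : Y →L[ℂ] Z) (C : X →L[ℂ] W) (D : Y →L[ℂ] W) :
    (X × Y) →L[ℂ] (Z × W) :=
  (A.comp (ContinuousLinearMap.fst ℂ X Y) + B.comp (ContinuousLinearMap.snd ℂ X Y)).prod
    (C.comp (ContinuousLinearMap.fst ℂ X Y) + D.comp (ContinuousLinearMap.snd ℂ X Y))

def InvertibleCLM {X Y : Type*} [NormedAddCommGroup X] [NormedSpace ℂ X]
    [NormedAddCommGroup Y] [NormedSpace ℂ Y] (T : X →L[ℂ] Y) : Prop :=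
  ∃ S : Y →L[ℂ] X, S.comp T = ContinuousLinearMap.id ℂ X ∧ T.comp S = ContinuousLinearMap.id ℂ Y

def AeZeroPos {r s : ℕ} (f : MatF r s) : Prop := ∀ᵐ t : ℝ, 0 < t → f t = 0
def AeZeroNeg {r s : ℕ} (f : MatF r s) : Prop := ∀ᵐ t : ℝ, t < 0 → f t = 0

def EGSol {p q : ℕ} (a : MatF p p) (b : MatF p q) (c : MatF q p) (d : MatF q q)
    (g : MatF p q) : Prop :=
  AeZeroPos (fun t => a t + conv g c t) ∧
  AeZeroNeg (fun t => adjF g t + conv (adjF g) a t + c t) ∧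
  AeZeroNeg (fun t => d t + conv (adjF g) b t) ∧
  AeZeroPos (fun t => g t + conv g d t + b t)


def colF {r s : ℕ} (f : MatF r s) (j : Fin s) : ℝ → Fin r → ℂ := fun t i => f t i j

/-- Condition (L1): `α*⋄α − γ*⋄γ = e_p`, `δ*⋄δ − β*⋄β = e_q`, `α*⋄β = γ*⋄δ`,
written out in terms of the data `a,b,c,d`. -/
def CondL1 {p q : ℕ} (a : MatF p p) (b : MatF p q) (c : MatF q p) (d : MatF q q) : Prop :=
  (∀ᵐ t ∂(volume : Measure ℝ), adjF a t + a t + conv (adjF a) a t - conv (adjF c) c t = 0) ∧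
  (∀ᵐ t ∂(volume : Measure ℝ), adjF d t + d t + conv (adjF d) d t - conv (adjF b) b t = 0) ∧
  (∀ᵐ t ∂(volume : Measure ℝ), b t + conv (adjF a) b t = adjF c t + conv (adjF c) d t)

/-- The transposed identities (conditions (C4)--(C6) in the `L¹` setting). -/
def CondL1T {p q : ℕ} (a : MatF p p) (b : MatF p q) (c : MatF q p) (d : MatF q q) : Prop :=
  (∀ᵐ t ∂(volume : Measure ℝ), a t + adjF a t + conv a (adjF a) t - conv b (adjF b) t = 0) ∧
  (∀ᵐ t ∂(volume : Measure ℝ), d t + adjF d t + conv d (adjF d) t - conv c (adjF c) t = 0) ∧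
  (∀ᵐ t ∂(volume : Measure ℝ), adjF c t + conv a (adjF c) t = b t + conv b (adjF d) t)

/-! ### Convolution of matrix kernels on the whole line -/

attribute [local instance] Matrix.normedAddCommGroup Matrix.normedSpace

/-- The norm topology on matrices. It coincides with `Matrix.topologicalSpace`, but only after
unfolding more than instance search does, so it is declared as an instance taking precedence over that one. -/
@[reducible] def matrixNormTopology (k m : ℕ) : TopologicalSpace (Matrix (Fin k) (Fin m) ℂ) :=
  UniformSpace.toTopologicalSpace (self := PseudoMetricSpace.toUniformSpace)

attribute [local instance] matrixNormTopology

/-- The continuous bilinear map `(A, v) ↦ A *ᵥ v`. -/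
def mvL (k m : ℕ) : Matrix (Fin k) (Fin m) ℂ →L[ℂ] (Fin m → ℂ) →L[ℂ] (Fin k → ℂ) :=
  (LinearMap.mk₂ ℂ (fun (A : Matrix (Fin k) (Fin m) ℂ) (v : Fin m → ℂ) => A *ᵥ v)
    Matrix.add_mulVec (fun c A v => Matrix.smul_mulVec c A v) Matrix.mulVec_add
    (fun c A v => Matrix.mulVec_smul A c v)).toContinuousBilinearMap

@[simp] lemma mvL_apply {k m : ℕ} (A : Matrix (Fin k) (Fin m) ℂ) (v : Fin m → ℂ) :
    mvL k m A v = A *ᵥ v := rfl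

/-- The continuous bilinear map `(A, B) ↦ A * B`. -/
def mmL (k m n : ℕ) : Matrix (Fin k) (Fin m) ℂ →L[ℂ] Matrix (Fin m) (Fin n) ℂ →L[ℂ]
    Matrix (Fin k) (Fin n) ℂ :=
  (LinearMap.mk₂ ℂ (fun (A : Matrix (Fin k) (Fin m) ℂ) (B : Matrix (Fin m) (Fin n) ℂ) => A * B)
    Matrix.add_mul (fun c A v => Matrix.smul_mul c A v) Matrix.mul_add
    (fun c A v => Matrix.mul_smul A c v)).toContinuousBilinearMap

@[simp] lemma mmL_apply {k m n : ℕ} (A : Matrix (Fin k) (Fin m) ℂ)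
    (B : Matrix (Fin m) (Fin n) ℂ) : mmL k m n A B = A * B := rfl

lemma integrable_matF {k m : ℕ} {r : MatF k m} (h : ∀ i j, Integrable fun t => r t i j) :
    Integrable r :=
  Integrable.of_eval fun i => Integrable.of_eval fun j => h i j

lemma integrable_adjF {k m : ℕ} {r : MatF k m} (h : ∀ i j, Integrable fun t => r t i j) :
    Integrable (adjF r) := by
  refine integrable_matF fun i j => ?_
  have h1 := (h j i).comp_neg
  exact (Complex.conjCLE : ℂ →L[ℝ] ℂ).integrable_comp h1

/-- Convolution on the whole line of a matrix kernel with a vector function. -/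
def cvl {k m : ℕ} (r : MatF k m) (F : ℝ → Fin m → ℂ) : ℝ → Fin k → ℂ :=
  convolution r F (mvL k m) volume

lemma cvl_apply {k m : ℕ} (r : MatF k m) (F : ℝ → Fin m → ℂ) (t : ℝ) :
    cvl r F t = ∫ s, r (t - s) *ᵥ F s := convolution_eq_swap _

/-- The entrywise `conv` is the matrix-valued Bochner convolution wherever the latter exists, hence
almost everywhere. -/
lemma conv_ae {k m n : ℕ} {r : MatF k m} {s : MatF m n} (hr : Integrable r) (hs : Integrable s) :
    conv r s =ᵐ[volume] convolution r s (mmL k m n) volume := by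
  filter_upwards [hr.ae_convolution_exists (mmL k m n) hs] with t ht
  have h2 := ht.integrable_swap
  rw [convolution_eq_swap]
  ext i j
  have h3 : ∀ i, Integrable fun τ => (mmL k m n (r (t - τ)) (s τ)) i :=
    fun i => Integrable.eval h2 i
  have e1 : (∫ τ, mmL k m n (r (t - τ)) (s τ)) i = ∫ τ, (mmL k m n (r (t - τ)) (s τ)) i :=
    eval_integral h3 i
  rw [e1, eval_integral fun j => Integrable.eval (h3 i) j]
  rfl

lemma integrable_conv {k m n : ℕ} {r : MatF k m} {s : MatF m n} (hr : Integrable r)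
    (hs : Integrable s) : Integrable (conv r s) :=
  (hr.integrable_convolution (mmL k m n) hs).congr (conv_ae hr hs).symm

lemma cvl_cvl {k m n : ℕ} {r : MatF k m} {s : MatF m n} {F : ℝ → Fin n → ℂ}
    (hr : Integrable r) (hs : Integrable s) (hF : Integrable F) :
    cvl r (cvl s F) =ᵐ[volume] cvl (conv r s) F := by
  have h0 : cvl (conv r s) F = convolution (convolution r s (mmL k m n) volume) F (mvL k n) volume :=
    convolution_congr _ (conv_ae hr hs) Filter.EventuallyEq.rfl
  rw [h0]
  have hsF := hs.norm.integrable_convolution (ContinuousLinearMap.mul ℝ ℝ) hF.norm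
  filter_upwards [hr.norm.ae_convolution_exists (ContinuousLinearMap.mul ℝ ℝ) hsF] with t ht
  refine (convolution_assoc (mmL k m n) (mvL k n) (mvL k m) (mvL m n) ?_ hr.1 hs.1 hF.1
    (hr.ae_convolution_exists _ hs) (hs.norm.ae_convolution_exists _ hF.norm) ht).symm
  intro x y z
  simp

lemma cvl_add_right {k m : ℕ} {r : MatF k m} {F G : ℝ → Fin m → ℂ} (hr : Integrable r)
    (hF : Integrable F) (hG : Integrable G) :
    cvl r (F + G) =ᵐ[volume] cvl r F + cvl r G := by
  filter_upwards [hr.ae_convolution_exists (mvL k m) hF, hr.ae_convolution_exists (mvL k m) hG]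
    with t h1 h2
  exact h1.distrib_add h2

lemma cvl_add_left {k m : ℕ} {r s : MatF k m} {F : ℝ → Fin m → ℂ} (hr : Integrable r)
    (hs : Integrable s) (hF : Integrable F) :
    cvl (r + s) F =ᵐ[volume] cvl r F + cvl s F := by
  filter_upwards [hr.ae_convolution_exists (mvL k m) hF, hs.ae_convolution_exists (mvL k m) hF]
    with t h1 h2
  exact h1.add_distrib h2

lemma cvl_integrable {k m : ℕ} {r : MatF k m} {F : ℝ → Fin m → ℂ} (hr : Integrable r)
    (hF : Integrable F) : Integrable (cvl r F) := hr.integrable_convolution _ hF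

lemma cvl_const_mulVec {k m n : ℕ} (r : MatF k m) (A : Matrix (Fin m) (Fin n) ℂ)
    (F : ℝ → Fin n → ℂ) : cvl r (fun t => A *ᵥ F t) = cvl (fun t => r t * A) F := by
  ext1 t
  simp [cvl_apply]

lemma mulVec_cvl {k m n : ℕ} {r : MatF m n} (A : Matrix (Fin k) (Fin m) ℂ)
    {F : ℝ → Fin n → ℂ} (hr : Integrable r) (hF : Integrable F) :
    (fun t => A *ᵥ cvl r F t) =ᵐ[volume] cvl (fun t => A * r t) F := by
  filter_upwards [hr.ae_convolution_exists (mvL m n) hF] with t ht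
  have h := (mvL k m A).integral_comp_comm ht.integrable_swap
  simp only [mvL_apply] at h
  rw [cvl_apply, cvl_apply, ← h]
  simp

/-! ### Operators on the line with symbol `r₀ e + r` -/

/-- The operator on functions on the whole line with symbol `r₀ e + r`. -/
def fullOp {k m : ℕ} (r₀ : Matrix (Fin k) (Fin m) ℂ) (r : MatF k m) (F : ℝ → Fin m → ℂ) :
    ℝ → Fin k → ℂ := fun t => r₀ *ᵥ F t + cvl r F t

/-- The kernel part of the product symbol `(r₀ e + r) ⋆ (s₀ e + s)`. -/
def prodKer {k m n : ℕ} (r₀ : Matrix (Fin k) (Fin m) ℂ) (r : MatF k m)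
    (s₀ : Matrix (Fin m) (Fin n) ℂ) (s : MatF m n) : MatF k n :=
  (fun t => r₀ * s t) + (fun t => r t * s₀) + conv r s

lemma integrable_const_mulVec {k m : ℕ} (A : Matrix (Fin k) (Fin m) ℂ) {F : ℝ → Fin m → ℂ}
    (hF : Integrable F) : Integrable fun t => A *ᵥ F t :=
  (mvL k m A).integrable_comp hF

lemma fullOp_integrable {k m : ℕ} (r₀ : Matrix (Fin k) (Fin m) ℂ) {r : MatF k m}
    {F : ℝ → Fin m → ℂ} (hr : Integrable r) (hF : Integrable F) :
    Integrable (fullOp r₀ r F) :=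
  (integrable_const_mulVec r₀ hF).add (cvl_integrable hr hF)

lemma fullOp_add {k m : ℕ} (r₀ : Matrix (Fin k) (Fin m) ℂ) {r : MatF k m}
    {F G : ℝ → Fin m → ℂ} (hr : Integrable r) (hF : Integrable F) (hG : Integrable G) :
    fullOp r₀ r (F + G) =ᵐ[volume] fullOp r₀ r F + fullOp r₀ r G := by
  filter_upwards [cvl_add_right hr hF hG] with t ht
  simp only [fullOp, Pi.add_apply, Matrix.mulVec_add] at ht ⊢
  rw [ht]
  abel

lemma fullOp_congr {k m : ℕ} (r₀ : Matrix (Fin k) (Fin m) ℂ) (r : MatF k m)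
    {F G : ℝ → Fin m → ℂ} (h : F =ᵐ[volume] G) :
    fullOp r₀ r F =ᵐ[volume] fullOp r₀ r G := by
  have h1 : cvl r F = cvl r G := convolution_congr _ Filter.EventuallyEq.rfl h
  filter_upwards [h] with t ht
  simp only [fullOp, h1, ht]

/-- Multiplicativity of the symbol calculus on the whole line. -/
lemma fullOp_fullOp {k m n : ℕ} (r₀ : Matrix (Fin k) (Fin m) ℂ) {r : MatF k m}
    (s₀ : Matrix (Fin m) (Fin n) ℂ) {s : MatF m n} {F : ℝ → Fin n → ℂ}
    (hr : Integrable r) (hs : Integrable s) (hF : Integrable F) :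
    fullOp r₀ r (fullOp s₀ s F) =ᵐ[volume] fullOp (r₀ * s₀) (prodKer r₀ r s₀ s) F := by
  have i1 : Integrable fun t => r₀ * s t := (mmL k m n r₀).integrable_comp hs
  have i2 : Integrable fun t => r t * s₀ := ((mmL k m n).flip s₀).integrable_comp hr
  filter_upwards [cvl_add_right hr (integrable_const_mulVec s₀ hF) (cvl_integrable hs hF),
    cvl_cvl hr hs hF, mulVec_cvl r₀ hs hF, cvl_add_left i1 i2 hF,
    cvl_add_left (i1.add i2) (integrable_conv hr hs) hF] with t h1 h2 h3 h4 h5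
  have e : fullOp s₀ s F = (fun t => s₀ *ᵥ F t) + cvl s F := rfl
  simp only [Pi.add_apply] at h1 h4 h5
  rw [e, fullOp, fullOp, prodKer, h1, h5, h4, h2, cvl_const_mulVec, ← h3]
  simp only [Pi.add_apply, Matrix.mulVec_add, Matrix.mulVec_mulVec]
  abel

/-! ### Half-line operators as blocks of the whole-line operators -/

/-- Extension by zero from `[0, ∞)` to the line. -/
def extP {n : ℕ} (f : L1P n) : ℝ → Fin n → ℂ := (Ici (0:ℝ)).indicator f

/-- Extension by zero from `(-∞, 0]` to the line. -/
def extM {n : ℕ} (f : L1M n) : ℝ → Fin n → ℂ := (Iic (0:ℝ)).indicator f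

lemma extP_integrable {n : ℕ} (f : L1P n) : Integrable (extP f) :=
  (integrable_indicator_iff measurableSet_Ici).2 (L1.integrable_coeFn f)

lemma extM_integrable {n : ℕ} (f : L1M n) : Integrable (extM f) :=
  (integrable_indicator_iff measurableSet_Iic).2 (L1.integrable_coeFn f)

lemma cvl_extP {k m : ℕ} (r : MatF k m) (f : L1P m) (t : ℝ) :
    ∫ s, (r (t - s)).mulVec (f s) ∂μP = cvl r (extP f) t := by
  change ∫ s in Ici (0:ℝ), _ = _
  rw [cvl_apply, ← integral_indicator measurableSet_Ici]
  congr 1 with s : 1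
  by_cases hs : s ∈ Ici (0:ℝ) <;> simp [extP, hs]

lemma cvl_extM {k m : ℕ} (r : MatF k m) (f : L1M m) (t : ℝ) :
    ∫ s, (r (t - s)).mulVec (f s) ∂μM = cvl r (extM f) t := by
  change ∫ s in Iic (0:ℝ), _ = _
  rw [cvl_apply, ← integral_indicator measurableSet_Iic]
  congr 1 with s : 1
  by_cases hs : s ∈ Iic (0:ℝ) <;> simp [extM, hs]

lemma μP_ac : μP ≪ volume := Measure.absolutelyContinuous_of_le Measure.restrict_le_self
lemma μM_ac : μM ≪ volume := Measure.absolutelyContinuous_of_le Measure.restrict_le_self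

lemma extP_ae {n : ℕ} (f : L1P n) : extP f =ᵐ[μP] f :=
  indicator_ae_eq_restrict measurableSet_Ici
lemma extM_ae {n : ℕ} (f : L1M n) : extM f =ᵐ[μM] f :=
  indicator_ae_eq_restrict measurableSet_Iic

lemma ae_ne_zero : ∀ᵐ t : ℝ, t ≠ (0 : ℝ) := by simp [ae_iff]

lemma extP_ae_zero {n : ℕ} (f : L1P n) : extP f =ᵐ[μM] fun _ => 0 := by
  filter_upwards [μM_ac.ae_le ae_ne_zero, ae_restrict_mem measurableSet_Iic] with t h0 ht
  have hn : t ∉ Ici (0:ℝ) := fun h => h0 (le_antisymm ht h)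
  exact indicator_of_notMem hn _

lemma extM_ae_zero {n : ℕ} (f : L1M n) : extM f =ᵐ[μP] fun _ => 0 := by
  filter_upwards [μP_ac.ae_le ae_ne_zero, ae_restrict_mem measurableSet_Ici] with t h0 ht
  have hn : t ∉ Iic (0:ℝ) := fun h => h0 (le_antisymm h ht)
  exact indicator_of_notMem hn _

lemma IsTP.full {k m : ℕ} {r₀ : Matrix (Fin k) (Fin m) ℂ} {r : MatF k m}
    {T : L1P m →L[ℂ] L1P k} (hT : IsTP r₀ r T) (f : L1P m) :
    ⇑(T f) =ᵐ[μP] fullOp r₀ r (extP f) := by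
  filter_upwards [hT f, extP_ae f] with t h1 h2
  rw [h1, fullOp, h2, cvl_extP]

lemma IsTM.full {k m : ℕ} {r₀ : Matrix (Fin k) (Fin m) ℂ} {r : MatF k m}
    {T : L1M m →L[ℂ] L1M k} (hT : IsTM r₀ r T) (f : L1M m) :
    ⇑(T f) =ᵐ[μM] fullOp r₀ r (extM f) := by
  filter_upwards [hT f, extM_ae f] with t h1 h2
  rw [h1, fullOp, h2, cvl_extM]

/-- A Hankel operator does not see the constant part `r₀` of the symbol, which may therefore be
chosen freely. -/
lemma IsHP.full {k m : ℕ} (r₀ : Matrix (Fin k) (Fin m) ℂ) {r : MatF k m}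
    {T : L1M m →L[ℂ] L1P k} (hT : IsHP r T) (f : L1M m) :
    ⇑(T f) =ᵐ[μP] fullOp r₀ r (extM f) := by
  filter_upwards [hT f, extM_ae_zero f] with t h1 h2
  rw [h1, fullOp, h2, cvl_extM]
  simp

/-- The counterpart of `IsHP.full` on the other half-line. -/
lemma IsHM.full {k m : ℕ} (r₀ : Matrix (Fin k) (Fin m) ℂ) {r : MatF k m}
    {T : L1P m →L[ℂ] L1M k} (hT : IsHM r T) (f : L1P m) :
    ⇑(T f) =ᵐ[μM] fullOp r₀ r (extP f) := by
  filter_upwards [hT f, extP_ae_zero f] with t h1 h2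
  rw [h1, fullOp, h2, cvl_extP]
  simp

/-- Two half-line functions that are the restrictions of `F` glue to `F`. -/
lemma ext_glue {n : ℕ} {F : ℝ → Fin n → ℂ} {g : L1P n} {h : L1M n} (hg : ⇑g =ᵐ[μP] F)
    (hh : ⇑h =ᵐ[μM] F) : extP g + extM h =ᵐ[volume] F := by
  have h1 := (ae_restrict_iff' measurableSet_Ici).1 hg
  have h2 := (ae_restrict_iff' measurableSet_Iic).1 hh
  filter_upwards [h1, h2, ae_ne_zero] with t h1 h2 h0
  rcases lt_or_gt_of_ne h0 with ht | ht
  · simp [extP, extM, ht.le, ht.not_ge, h2]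
  · simp [extP, extM, ht.le, ht.not_ge, h1]

/-- The compressions of the operator with symbol `ρ` through the two half-lines add up to the
compression of the product symbol `ρ ⋆ σ`; this is `T T + H H` (or `T H + H T`) in one formula. -/
lemma compress {k m n : ℕ} {μ : Measure ℝ} (hμ : μ ≪ volume)
    {r₀ : Matrix (Fin k) (Fin m) ℂ} {r : MatF k m}
    {s₀ : Matrix (Fin m) (Fin n) ℂ} {s : MatF m n} {F : ℝ → Fin n → ℂ}
    (hr : Integrable r) (hs : Integrable s) (hF : Integrable F)
    {g : L1P m} {h : L1M m} (hg : ⇑g =ᵐ[μP] fullOp s₀ s F) (hh : ⇑h =ᵐ[μM] fullOp s₀ s F)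
    {u v : Lp (Fin k → ℂ) 1 μ} (hu : ⇑u =ᵐ[μ] fullOp r₀ r (extP g))
    (hv : ⇑v =ᵐ[μ] fullOp r₀ r (extM h)) :
    ⇑(u + v) =ᵐ[μ] fullOp (r₀ * s₀) (prodKer r₀ r s₀ s) F := by
  have e1 := fullOp_add r₀ hr (extP_integrable g) (extM_integrable h)
  have e2 := fullOp_congr r₀ r (ext_glue hg hh)
  have e3 := fullOp_fullOp r₀ s₀ hr hs hF
  filter_upwards [hu, hv, Lp.coeFn_add u v, hμ.ae_le e1, hμ.ae_le e2, hμ.ae_le e3]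
    with t hu hv huv e1 e2 e3
  rw [huv, Pi.add_apply, hu, hv, ← e3, ← e2, e1, Pi.add_apply]

/-! ### Identities between symbols -/

lemma fullOp_ker_congr {k m : ℕ} (r₀ : Matrix (Fin k) (Fin m) ℂ) {r s : MatF k m}
    (F : ℝ → Fin m → ℂ) (h : r =ᵐ[volume] s) : fullOp r₀ r F = fullOp r₀ s F := by
  have h1 : cvl r F = cvl s F := convolution_congr _ h Filter.EventuallyEq.rfl
  ext1 t
  simp only [fullOp, h1]

lemma adjF_adjF {k m : ℕ} (r : MatF k m) : adjF (adjF r) = r := by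
  ext t : 1
  simp [adjF]

lemma adjF_conv {k m n : ℕ} (r : MatF k m) (s : MatF m n) :
    adjF (conv r s) = conv (adjF s) (adjF r) := by
  ext t i j
  simp only [adjF, conv, Matrix.conjTranspose_apply, Matrix.of_apply, ← Matrix.conjTranspose_mul]
  rw [← integral_sub_right_eq_self _ t, Complex.star_def, ← integral_conj]
  congr 1 with τ
  have e1 : -t - (τ - t) = -τ := by ring
  have e2 : τ - t = -(t - τ) := by ring
  rw [e1, e2]

lemma adjF_congr {k m : ℕ} {r s : MatF k m} (h : r =ᵐ[volume] s) :
    adjF r =ᵐ[volume] adjF s := by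
  have := (Measure.measurePreserving_neg (volume : Measure ℝ)).quasiMeasurePreserving.ae h
  filter_upwards [this] with t ht
  simp only [adjF, ht]

/-- Lemma 7.4: alternative representations of the operators `Mᵢⱼ`. -/
theorem stmt6 {p q : ℕ}
    (a : MatF p p) (b : MatF p q) (c : MatF q p) (d : MatF q q)
    (ha : L1Plus a) (hb : L1Plus b) (hc : L1Minus c) (hd : L1Minus d)
    (hT : CondL1T a b c d)
    (Tpα : L1P p →L[ℂ] L1P p) (hTpα : IsTP 1 a Tpα)
    (Tpαs : L1P p →L[ℂ] L1P p) (hTpαs : IsTP 1 (adjF a) Tpαs)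
    (Tpβ : L1P q →L[ℂ] L1P p) (hTpβ : IsTP 0 b Tpβ)
    (Tpβs : L1P p →L[ℂ] L1P q) (hTpβs : IsTP 0 (adjF b) Tpβs)
    (Tmδ : L1M q →L[ℂ] L1M q) (hTmδ : IsTM 1 d Tmδ)
    (Tmδs : L1M q →L[ℂ] L1M q) (hTmδs : IsTM 1 (adjF d) Tmδs)
    (Tmγ : L1M p →L[ℂ] L1M q) (hTmγ : IsTM 0 c Tmγ)
    (Tmγs : L1M q →L[ℂ] L1M p) (hTmγs : IsTM 0 (adjF c) Tmγs)
    (Hpα : L1M p →L[ℂ] L1P p) (hHpα : IsHP a Hpα)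
    (Hpβ : L1M q →L[ℂ] L1P p) (hHpβ : IsHP b Hpβ)
    (Hmγ : L1P p →L[ℂ] L1M q) (hHmγ : IsHM c Hmγ)
    (Hmδ : L1P q →L[ℂ] L1M q) (hHmδ : IsHM d Hmδ)
    (Hmαs : L1P p →L[ℂ] L1M p) (hHmαs : IsHM (adjF a) Hmαs)
    (Hmβs : L1P p →L[ℂ] L1M q) (hHmβs : IsHM (adjF b) Hmβs)
    (Hpγs : L1M q →L[ℂ] L1P p) (hHpγs : IsHP (adjF c) Hpγs)
    (Hpδs : L1M q →L[ℂ] L1P q) (hHpδs : IsHP (adjF d) Hpδs) :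
    Tpα.comp Tpαs - Tpβ.comp Tpβs =
      ContinuousLinearMap.id ℂ (L1P p) - Hpα.comp Hmαs + Hpβ.comp Hmβs ∧
    Hmγ.comp Tpαs - Hmδ.comp Tpβs = Tmδ.comp Hmβs - Tmγ.comp Hmαs ∧
    Hpβ.comp Tmδs - Hpα.comp Tmγs = Tpα.comp Hpγs - Tpβ.comp Hpδs ∧
    Tmδ.comp Tmδs - Tmγ.comp Tmγs =
      ContinuousLinearMap.id ℂ (L1M q) - Hmδ.comp Hpδs + Hmγ.comp Hpγs := by
  obtain ⟨h1, h2, h3⟩ := hT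
  have ia := integrable_matF ha.1
  have ib := integrable_matF hb.1
  have ic := integrable_matF hc.1
  have idd := integrable_matF hd.1
  have ias := integrable_adjF ha.1
  have ibs := integrable_adjF hb.1
  have ics := integrable_adjF hc.1
  have ids := integrable_adjF hd.1
  have k1 : prodKer 1 a 1 (adjF a) =ᵐ[volume] prodKer 0 b 0 (adjF b) := by
    filter_upwards [h1] with t ht
    simp only [prodKer, Pi.add_apply, one_mul, mul_one, Matrix.zero_mul, Matrix.mul_zero, zero_add]
    rw [add_comm (adjF a t), ← sub_eq_zero, ht]
  have k2 : prodKer 1 d 1 (adjF d) =ᵐ[volume] prodKer 0 c 0 (adjF c) := by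
    filter_upwards [h2] with t ht
    simp only [prodKer, Pi.add_apply, one_mul, mul_one, Matrix.zero_mul, Matrix.mul_zero, zero_add]
    rw [add_comm (adjF d t), ← sub_eq_zero, ht]
  have k3 : prodKer 1 a 0 (adjF c) =ᵐ[volume] prodKer 0 b 1 (adjF d) := by
    filter_upwards [h3] with t ht
    simpa [prodKer] using ht
  have k4 : prodKer 0 c 1 (adjF a) =ᵐ[volume] prodKer 1 d 0 (adjF b) := by
    -- the adjoint of the third identity: `c + c ⋆ a* = b* + d ⋆ b*`
    have h3a := adjF_congr (r := adjF c + conv a (adjF c)) (s := b + conv b (adjF d)) h3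
    have e (k m : ℕ) (r s : MatF k m) : adjF (r + s) = adjF r + adjF s := by
      ext t : 1
      simp [adjF]
    rw [e, e, adjF_conv, adjF_conv, adjF_adjF, adjF_adjF] at h3a
    filter_upwards [h3a] with t ht
    simpa [prodKer] using ht
  refine ⟨?_, ?_, ?_, ?_⟩ <;> ext1 f
  · have A := compress μP_ac ia ias (extP_integrable f) (hTpαs.full f) (hHmαs.full 1 f)
      (hTpα.full _) (hHpα.full 1 _)
    have B := compress μP_ac ib ibs (extP_integrable f) (hTpβs.full f) (hHmβs.full 0 f)
      (hTpβ.full _) (hHpβ.full 0 _)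
    rw [fullOp_ker_congr _ _ k1] at A
    have E : Tpα (Tpαs f) + Hpα (Hmαs f) = f + (Tpβ (Tpβs f) + Hpβ (Hmβs f)) := by
      refine Lp.ext ?_
      filter_upwards [A, B, extP_ae f, Lp.coeFn_add f (Tpβ (Tpβs f) + Hpβ (Hmβs f))]
        with t hA hB hf hs
      rw [hs, Pi.add_apply, hA, hB, fullOp, fullOp, hf]
      simp
    simp only [_root_.sub_apply, _root_.add_apply,
      ContinuousLinearMap.comp_apply, ContinuousLinearMap.id_apply]
    rw [eq_sub_of_add_eq E]
    abel
  · have A := compress μM_ac ic ias (extP_integrable f) (hTpαs.full f) (hHmαs.full 1 f)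
      (hHmγ.full 0 _) (hTmγ.full _)
    have B := compress μM_ac idd ibs (extP_integrable f) (hTpβs.full f) (hHmβs.full 0 f)
      (hHmδ.full 1 _) (hTmδ.full _)
    rw [fullOp_ker_congr _ _ k4] at A
    have E : Hmγ (Tpαs f) + Tmγ (Hmαs f) = Hmδ (Tpβs f) + Tmδ (Hmβs f) := by
      refine Lp.ext ?_
      filter_upwards [A, B] with t hA hB
      rw [hA, hB, fullOp, fullOp]
      simp
    simp only [_root_.sub_apply, ContinuousLinearMap.comp_apply]
    rw [eq_sub_of_add_eq E]
    abel
  · have A := compress μP_ac ia ics (extM_integrable f) (hHpγs.full 0 f) (hTmγs.full f)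
      (hTpα.full _) (hHpα.full 1 _)
    have B := compress μP_ac ib ids (extM_integrable f) (hHpδs.full 1 f) (hTmδs.full f)
      (hTpβ.full _) (hHpβ.full 0 _)
    rw [fullOp_ker_congr _ _ k3] at A
    have E : Tpα (Hpγs f) + Hpα (Tmγs f) = Tpβ (Hpδs f) + Hpβ (Tmδs f) := by
      refine Lp.ext ?_
      filter_upwards [A, B] with t hA hB
      rw [hA, hB, fullOp, fullOp]
      simp
    simp only [_root_.sub_apply, ContinuousLinearMap.comp_apply]
    rw [eq_sub_of_add_eq E]
    abel
  · have A := compress μM_ac idd ids (extM_integrable f) (hHpδs.full 1 f) (hTmδs.full f)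
      (hHmδ.full 1 _) (hTmδ.full _)
    have B := compress μM_ac ic ics (extM_integrable f) (hHpγs.full 0 f) (hTmγs.full f)
      (hHmγ.full 0 _) (hTmγ.full _)
    rw [fullOp_ker_congr _ _ k2] at A
    have E : Hmδ (Hpδs f) + Tmδ (Tmδs f) = f + (Hmγ (Hpγs f) + Tmγ (Tmγs f)) := by
      refine Lp.ext ?_
      filter_upwards [A, B, extM_ae f, Lp.coeFn_add f (Hmγ (Hpγs f) + Tmγ (Tmγs f))]
        with t hA hB hf hs
      rw [hs, Pi.add_apply, hA, hB, fullOp, fullOp, hf]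
      simp
    simp only [_root_.sub_apply, _root_.add_apply,
      ContinuousLinearMap.comp_apply, ContinuousLinearMap.id_apply]
    rw [eq_sub_of_add_eq' E]
    abel
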